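/- arXiv:2605.02043 — 3 statements merged into one kernel-verified Lean document; each statement's English description precedes it below -/
import Mathlib

section
/- Let f : ℝ^d → ℝ be differentiable with L-Lipschitz gradient (L > 0), let 0 < η ≤ 1/(2L), and let x, m ∈ ℝ^d. Then f(x − η m) ≤ f(x) − (η/4)‖m‖² + (η/2)‖m − ∇f(x)‖². -/
/-! Along the segment from `x` to `y`, a one-sided Lipschitz bound on the gradient makes the slope
of `f` at time `t` exceed its initial slope by at most `L * t * ‖y - x‖ ^ 2`, so `f` stays below the
parabola with that slope bound. At `y = x - η • m`, polarization of `η * ⟪m, ∇ f x⟫` trades the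
first-order term for `η / 2 * ‖m - ∇ f x‖ ^ 2` minus `η / 2` times `‖m‖ ^ 2` and `‖∇ f x‖ ^ 2`, and
for `η ≤ 1 / (2 * L)` the parabola costs at most half of the gain in `‖m‖ ^ 2`. -/

open Set AffineMap
open scoped Gradient RealInnerProductSpace

theorem image_le_quadratic_of_deriv_right_le_affine {g g' : ℝ → ℝ} {a b p C : ℝ} (hab : a ≤ b)
    (hg : ContinuousOn g (Icc a b)) (hg' : ∀ t ∈ Ico a b, HasDerivWithinAt g (g' t) (Ici t) t)
    (bound : ∀ t ∈ Ico a b, g' t ≤ p + C * (t - a)) :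
    g b ≤ g a + p * (b - a) + C / 2 * (b - a) ^ 2 := by
  have hquad (t : ℝ) : HasDerivAt (fun t ↦ g a + p * (t - a) + C / 2 * (t - a) ^ 2)
      (p + C * (t - a)) t := by
    have hshift : HasDerivAt (fun t ↦ t - a) 1 t := (hasDerivAt_id t).sub_const a
    refine (((hshift.const_mul p).const_add (g a)).add
      ((hshift.pow 2).const_mul (C / 2))).congr_deriv ?_
    ring
  exact image_le_of_deriv_right_le_deriv_boundary hg hg' (by simp)
    (fun t _ ↦ (hquad t).continuousAt.continuousWithinAt)
    (fun t _ ↦ (hquad t).hasDerivWithinAt) bound (right_mem_Icc.2 hab)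

section NormedSpace

variable {E : Type*} [NormedAddCommGroup E] [NormedSpace ℝ E] {f : E → ℝ} {x y : E} {L : ℝ}

theorem fderiv_lineMap_sub_fderiv_le
    (hL : ∀ z ∈ segment ℝ x y, (fderiv ℝ f z - fderiv ℝ f x) (z - x) ≤ L * ‖z - x‖ ^ 2)
    {t : ℝ} (ht : t ∈ Icc 0 1) :
    (fderiv ℝ f (lineMap x y t) - fderiv ℝ f x) (y - x) ≤ L * ‖y - x‖ ^ 2 * t := by
  obtain rfl | htpos := ht.1.eq_or_lt
  · simp
  have hz := hL (lineMap x y t) (lineMap_mem_segment ℝ x y ht)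
  have hsub : lineMap x y t - x = t • (y - x) := by simp [lineMap_apply]
  rw [hsub, map_smul, smul_eq_mul, norm_smul, Real.norm_of_nonneg ht.1] at hz
  refine le_of_mul_le_mul_left (hz.trans_eq ?_) htpos
  ring

theorem le_add_fderiv_add_sq_of_fderiv_sub_le
    (hf : ∀ z ∈ segment ℝ x y, DifferentiableAt ℝ f z)
    (hL : ∀ z ∈ segment ℝ x y, (fderiv ℝ f z - fderiv ℝ f x) (z - x) ≤ L * ‖z - x‖ ^ 2) :
    f y ≤ f x + fderiv ℝ f x (y - x) + L / 2 * ‖y - x‖ ^ 2 := by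
  have hline (t : ℝ) (ht : t ∈ Icc 0 1) :
      HasDerivAt (f ∘ lineMap x y) (fderiv ℝ f (lineMap x y t) (y - x)) t :=
    (hf _ (lineMap_mem_segment ℝ x y ht)).hasFDerivAt.comp_hasDerivAt t hasDerivAt_lineMap
  have hslope (t : ℝ) (ht : t ∈ Ico 0 1) : fderiv ℝ f (lineMap x y t) (y - x) ≤
      fderiv ℝ f x (y - x) + L * ‖y - x‖ ^ 2 * (t - 0) := by
    have h := fderiv_lineMap_sub_fderiv_le hL (Ico_subset_Icc_self ht)
    rw [sub_apply] at h
    linarith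
  have h := image_le_quadratic_of_deriv_right_le_affine zero_le_one
    (fun t ht ↦ (hline t ht).continuousAt.continuousWithinAt)
    (fun t ht ↦ (hline t (Ico_subset_Icc_self ht)).hasDerivWithinAt) hslope
  simp only [Function.comp_apply, lineMap_apply_zero, lineMap_apply_one] at h
  linarith

end NormedSpace

section InnerProductSpace

variable {E : Type*} [NormedAddCommGroup E] [InnerProductSpace ℝ E]

theorem real_inner_le_mul_norm_sq_of_norm_le {u v : E} {L : ℝ} (h : ‖u‖ ≤ L * ‖v‖) :
    ⟪u, v⟫ ≤ L * ‖v‖ ^ 2 :=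
  calc
    ⟪u, v⟫ ≤ ‖u‖ * ‖v‖ := real_inner_le_norm u v
    _ ≤ L * ‖v‖ * ‖v‖ := by gcongr
    _ = L * ‖v‖ ^ 2 := by ring

variable [CompleteSpace E] {f : E → ℝ} {x : E} {L : ℝ}

theorem le_add_inner_gradient_add_sq_of_inner_gradient_sub_le {y : E}
    (hf : ∀ z ∈ segment ℝ x y, DifferentiableAt ℝ f z)
    (hL : ∀ z ∈ segment ℝ x y, ⟪∇ f z - ∇ f x, z - x⟫ ≤ L * ‖z - x‖ ^ 2) :
    f y ≤ f x + ⟪∇ f x, y - x⟫ + L / 2 * ‖y - x‖ ^ 2 := by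
  simp only [inner_sub_left, inner_gradient_left] at hL ⊢
  exact le_add_fderiv_add_sq_of_fderiv_sub_le hf hL

theorem apply_sub_smul_le_of_inner_gradient_sub_le {η : ℝ} {m : E}
    (hf : ∀ z ∈ segment ℝ x (x - η • m), DifferentiableAt ℝ f z)
    (hL : ∀ z ∈ segment ℝ x (x - η • m), ⟪∇ f z - ∇ f x, z - x⟫ ≤ L * ‖z - x‖ ^ 2) :
    f (x - η • m) ≤ f x - η / 2 * ‖∇ f x‖ ^ 2 - (η / 2 - L * η ^ 2 / 2) * ‖m‖ ^ 2
      + η / 2 * ‖m - ∇ f x‖ ^ 2 := by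
  have hstep : x - η • m - x = -(η • m) := by abel
  calc
    f (x - η • m) ≤ f x + ⟪∇ f x, x - η • m - x⟫ + L / 2 * ‖x - η • m - x‖ ^ 2 :=
      le_add_inner_gradient_add_sq_of_inner_gradient_sub_le hf hL
    _ = f x - η * ⟪m, ∇ f x⟫ + L / 2 * (η ^ 2 * ‖m‖ ^ 2) := by
      rw [hstep, inner_neg_right, real_inner_smul_right, real_inner_comm, norm_neg, norm_smul,
        mul_pow, Real.norm_eq_abs, sq_abs, sub_eq_add_neg]
    _ = _ := by
      rw [norm_sub_sq_real]
      ring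

theorem descent_step_momentum_bound_general {η : ℝ} {m : E}
    (hdiff : ∀ z ∈ segment ℝ x (x - η • m), DifferentiableAt ℝ f z)
    (hsmooth : ∀ z ∈ segment ℝ x (x - η • m), ⟪∇ f z - ∇ f x, z - x⟫ ≤ L * ‖z - x‖ ^ 2)
    (hη : 0 ≤ η) (hηL : η * (2 * L) ≤ 1) :
    f (x - η • m) ≤ f x - η / 4 * ‖m‖ ^ 2 + η / 2 * ‖m - ∇ f x‖ ^ 2 := by
  have hcoeff : η / 4 ≤ η / 2 - L * η ^ 2 / 2 := by
    linarith [mul_le_mul_of_nonneg_left hηL hη]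
  have hmomentum : η / 4 * ‖m‖ ^ 2 ≤ (η / 2 - L * η ^ 2 / 2) * ‖m‖ ^ 2 := by gcongr
  have hgrad : 0 ≤ η / 2 * ‖∇ f x‖ ^ 2 := by positivity
  linarith [apply_sub_smul_le_of_inner_gradient_sub_le hdiff hsmooth]

end InnerProductSpace

/-- For `f` differentiable with `L`-Lipschitz gradient, `0 < η ≤ 1/(2L)`,
and any `x, m`: `f(x − η m) ≤ f(x) − (η/4)‖m‖² + (η/2)‖m − ∇f(x)‖²`. -/
theorem descent_step_momentum_bound
    {d : ℕ} (f : EuclideanSpace ℝ (Fin d) → ℝ) (L : ℝ) (hL : 0 < L)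
    (hdiff : Differentiable ℝ f)
    (hsmooth : ∀ x y : EuclideanSpace ℝ (Fin d),
      ‖gradient f x - gradient f y‖ ≤ L * ‖x - y‖)
    (η : ℝ) (hη : 0 < η) (hη' : η ≤ 1 / (2 * L))
    (x m : EuclideanSpace ℝ (Fin d)) :
    f (x - η • m) ≤ f x - (η / 4) * ‖m‖ ^ 2 + (η / 2) * ‖m - gradient f x‖ ^ 2 :=
  descent_step_momentum_bound_general (fun z _ ↦ hdiff z)
    (fun z _ ↦ real_inner_le_mul_norm_sq_of_norm_le (hsmooth z x)) hη.le
    ((le_div_iff₀ (by positivity)).1 hη')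
end

section
/- (One-step recursion for the expected momentum error.) Let f : ℝ^d → ℝ be differentiable with L-Lipschitz gradient (L > 0), let β ∈ (0,1), η > 0, and let x, m, ē ∈ ℝ^d. Set x' := x − η m and ē' := (1−β)(ē + ∇f(x) − ∇f(x')). Then ‖ē'‖² ≤ (1−β)‖ē‖² + (L²η²/β)‖m‖². -/
/-!
The new error is the convex combination `(1 - β) • a + β • (((1 - β) / β) • b)` of the old error `a`
and a rescaling of the change `b` of the gradient, so convexity of `‖·‖ ^ 2` bounds its squared norm
by `(1 - β) * ‖a‖ ^ 2 + (1 - β) ^ 2 / β * ‖b‖ ^ 2`. Smoothness bounds `‖b‖` by `L * ‖η • m‖`,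
and `(1 - β) ^ 2 ≤ 1`.
-/

section

variable {E F : Type*} [SeminormedAddCommGroup E] [NormedSpace ℝ E]
  [SeminormedAddCommGroup F]

theorem norm_map_sub_map_sub_smul_sq_le {g : E → F} {L : ℝ}
    (hg : ∀ x y, ‖g x - g y‖ ≤ L * ‖x - y‖) (η : ℝ) (x m : E) :
    ‖g x - g (x - η • m)‖ ^ 2 ≤ L ^ 2 * η ^ 2 * ‖m‖ ^ 2 :=
  calc ‖g x - g (x - η • m)‖ ^ 2
      ≤ (L * ‖x - (x - η • m)‖) ^ 2 := by gcongr; exact hg _ _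
    _ = L ^ 2 * η ^ 2 * ‖m‖ ^ 2 := by
        rw [sub_sub_cancel, norm_smul, mul_pow, mul_pow, Real.norm_eq_abs, sq_abs, mul_assoc]

variable [NormedSpace ℝ F]

theorem norm_one_sub_smul_add_sq_le {β : ℝ} (hβ0 : 0 < β) (hβ1 : β ≤ 1) (a b : F) :
    ‖(1 - β) • (a + b)‖ ^ 2 ≤ (1 - β) * ‖a‖ ^ 2 + (1 - β) ^ 2 / β * ‖b‖ ^ 2 := by
  have convexOn_norm_sq : ConvexOn ℝ Set.univ fun v : F ↦ ‖v‖ ^ 2 :=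
    convexOn_univ_norm.pow (fun _ _ ↦ norm_nonneg _) 2
  have convex_combination :
      (1 - β) • (a + b) = (1 - β) • a + β • (((1 - β) / β) • b) := by
    rw [smul_smul, mul_div_cancel₀ _ hβ0.ne', smul_add]
  calc ‖(1 - β) • (a + b)‖ ^ 2
      = ‖(1 - β) • a + β • (((1 - β) / β) • b)‖ ^ 2 := by rw [convex_combination]
    _ ≤ (1 - β) * ‖a‖ ^ 2 + β * ‖((1 - β) / β) • b‖ ^ 2 :=
        convexOn_norm_sq.2 (Set.mem_univ _) (Set.mem_univ _) (sub_nonneg.2 hβ1) hβ0.le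
          (sub_add_cancel 1 β)
    _ = (1 - β) * ‖a‖ ^ 2 + (1 - β) ^ 2 / β * ‖b‖ ^ 2 := by
        rw [norm_smul, mul_pow, Real.norm_eq_abs, sq_abs]
        field_simp

theorem expected_momentum_error_one_step_general {g : E → F} {L : ℝ}
    (hg : ∀ x y, ‖g x - g y‖ ≤ L * ‖x - y‖) {β : ℝ} (hβ0 : 0 < β) (hβ1 : β ≤ 1) (η : ℝ)
    (x m : E) (ebar : F) :
    ‖(1 - β) • (ebar + g x - g (x - η • m))‖ ^ 2 ≤
      (1 - β) * ‖ebar‖ ^ 2 + (L ^ 2 * η ^ 2 / β) * ‖m‖ ^ 2 := by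
  have sq_one_sub_le : (1 - β) ^ 2 ≤ 1 := pow_le_one₀ (sub_nonneg.2 hβ1) (by linarith)
  calc ‖(1 - β) • (ebar + g x - g (x - η • m))‖ ^ 2
      ≤ (1 - β) * ‖ebar‖ ^ 2 + (1 - β) ^ 2 / β * ‖g x - g (x - η • m)‖ ^ 2 := by
        rw [add_sub_assoc]
        exact norm_one_sub_smul_add_sq_le hβ0 hβ1 _ _
    _ ≤ (1 - β) * ‖ebar‖ ^ 2 + 1 / β * (L ^ 2 * η ^ 2 * ‖m‖ ^ 2) := by
        gcongr
        exact norm_map_sub_map_sub_smul_sq_le hg η x m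
    _ = (1 - β) * ‖ebar‖ ^ 2 + (L ^ 2 * η ^ 2 / β) * ‖m‖ ^ 2 := by ring

end

/-- **One-step recursion for the expected momentum error.** For `f`
differentiable with `L`-Lipschitz gradient, `β ∈ (0,1)`, `η > 0`, `x' := x − η m` and
`ē' := (1−β)(ē + ∇f(x) − ∇f(x'))`, we have `‖ē'‖² ≤ (1−β)‖ē‖² + (L²η²/β)‖m‖²`. -/
theorem expected_momentum_error_one_step
    {d : ℕ} (f : EuclideanSpace ℝ (Fin d) → ℝ) (L : ℝ) (hL : 0 < L)
    (hdiff : Differentiable ℝ f)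
    (hsmooth : ∀ x y : EuclideanSpace ℝ (Fin d),
      ‖gradient f x - gradient f y‖ ≤ L * ‖x - y‖)
    (β η : ℝ) (hβ0 : 0 < β) (hβ1 : β < 1) (hη : 0 < η)
    (x m ebar : EuclideanSpace ℝ (Fin d)) :
    ‖(1 - β) • (ebar + gradient f x - gradient f (x - η • m))‖ ^ 2 ≤
      (1 - β) * ‖ebar‖ ^ 2 + (L ^ 2 * η ^ 2 / β) * ‖m‖ ^ 2 :=
  expected_momentum_error_one_step_general hsmooth hβ0 hβ1.le η x m ebar
end

section
/- (Arithmetic core and tuning of the nonconvex rate, Theorem on nonconvex smooth objectives.) Let L, Δ, σ, T > 0, β ∈ (0,1), and set η := β/(2√2·L). Suppose nonnegative reals G, E, Ê, Q satisfy: (i) E ≤ 2Ê + G/4; (ii) Ê ≤ 2LΔ/(βT) + βσ² + (L²η²/β²)·Q; (iii) Q ≤ 4Δ/(ηT) + 2E; (iv) G ≤ 2Δ/(ηT) + E. Then G ≤ 40LΔ/(βT) + 8βσ². Moreover, if M ≥ 2 is an integer and β = min{1/(16(M−1)), √(5LΔ)/(σ√T)}, then G ≤ 640LΔ(M−1)/T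 + 16√5·σ√(LΔ)/√T. -/
/-!
With `c = L²η²/β²`, substituting the four bounds into one another gives
`(3/4 - 4c) G ≤ 2 (2LΔ/(βT) + βσ²) + 2Δ/(ηT)`. The step size is chosen so that `c = 1/8` and
`Δ/(ηT) = 2√2 LΔ/(βT)`; bounding `√2` by `3/2` then yields `40LΔ/(βT) + 8βσ²`.

This bound has the form `x / β + y β`, whose two terms agree, and equal `√(x y)`, at `β = √(x / y)`.
Here `√(x / y) = √(5LΔ)/(σ√T)`, so truncating this value at `a` costs only an extra `x / a`.
-/

section Elimination

variable {𝕜 : Type*} [Field 𝕜] [LinearOrder 𝕜] [IsStrictOrderedRing 𝕜]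

theorem mul_le_of_momentum_error_bounds {G E Ehat Q a c d : 𝕜} (hc₀ : 0 ≤ c) (hc : c ≤ 1 / 4)
    (hE : E ≤ 2 * Ehat + G / 4) (hEhat : Ehat ≤ a + c * Q)
    (hQ : Q ≤ 2 * d + 2 * E) (hG : G ≤ d + E) :
    (3 / 4 - 4 * c) * G ≤ 2 * a + d := by
  have hcQ : c * Q ≤ c * (2 * d + 2 * E) := mul_le_mul_of_nonneg_left hQ hc₀
  have hE' : (1 - 4 * c) * E ≤ 2 * a + 4 * c * d + G / 4 := by linarith
  have hG' : (1 - 4 * c) * G ≤ d + 2 * a + G / 4 := calc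
    (1 - 4 * c) * G ≤ (1 - 4 * c) * (d + E) := mul_le_mul_of_nonneg_left hG (by linarith)
    _ = (1 - 4 * c) * d + (1 - 4 * c) * E := mul_add _ _ _
    _ ≤ (1 - 4 * c) * d + (2 * a + 4 * c * d + G / 4) := by gcongr
    _ = d + 2 * a + G / 4 := by ring
  linarith

end Elimination

section StepSize

variable {L Δ T β η : ℝ}

theorem sq_mul_sq_div_sq_of_stepSize (hL : L ≠ 0) (hβ : β ≠ 0) (hη : η = β / (2 * √2 * L)) :
    L ^ 2 * η ^ 2 / β ^ 2 = 1 / 8 := by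
  have hsqrt : √(2 : ℝ) ^ 2 = 2 := Real.sq_sqrt zero_le_two
  rw [hη, div_pow, mul_pow, mul_pow, hsqrt]
  field_simp
  norm_num

theorem div_mul_of_stepSize (hη : η = β / (2 * √2 * L)) :
    Δ / (η * T) = 2 * √2 * (L * Δ / (β * T)) := by
  rw [hη, div_mul_eq_mul_div, div_div_eq_mul_div]
  ring

theorem le_rate_of_momentum_error_bounds {σ G E Ehat Q : ℝ} (hL : 0 < L) (hΔ : 0 ≤ Δ) (hT : 0 ≤ T)
    (hβ : 0 < β) (hη : η = β / (2 * √2 * L))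
    (hE : E ≤ 2 * Ehat + G / 4)
    (hEhat : Ehat ≤ 2 * L * Δ / (β * T) + β * σ ^ 2 + (L ^ 2 * η ^ 2 / β ^ 2) * Q)
    (hQ : Q ≤ 4 * Δ / (η * T) + 2 * E)
    (hG : G ≤ 2 * Δ / (η * T) + E) :
    G ≤ 40 * L * Δ / (β * T) + 8 * β * σ ^ 2 := by
  rw [sq_mul_sq_div_sq_of_stepSize hL.ne' hβ.ne' hη] at hEhat
  have helim : (3 / 4 - 4 * (1 / 8)) * G ≤
      2 * (2 * L * Δ / (β * T) + β * σ ^ 2) + 2 * Δ / (η * T) :=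
    mul_le_of_momentum_error_bounds (by norm_num) (by norm_num) hE hEhat
      (hQ.trans_eq (by ring)) hG
  have hsqrt : √(2 : ℝ) * (L * Δ / (β * T)) ≤ 3 / 2 * (L * Δ / (β * T)) :=
    mul_le_mul_of_nonneg_right Real.sqrt_two_lt_three_halves.le (by positivity)
  calc
    G ≤ 4 * (2 * (2 * L * Δ / (β * T) + β * σ ^ 2) + 2 * Δ / (η * T)) := by linarith
    _ = 16 * (L * Δ / (β * T)) + 16 * (√2 * (L * Δ / (β * T))) + 8 * β * σ ^ 2 := by
      rw [mul_div_assoc 2 Δ, div_mul_of_stepSize hη]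
      ring
    _ ≤ 16 * (L * Δ / (β * T)) + 16 * (3 / 2 * (L * Δ / (β * T))) + 8 * β * σ ^ 2 := by gcongr
    _ = 40 * L * Δ / (β * T) + 8 * β * σ ^ 2 := by ring

end StepSize

section Tuning

theorem div_sqrt_div_eq_sqrt_mul {x : ℝ} (hx : 0 ≤ x) (y : ℝ) : x / √(x / y) = √(x * y) := by
  rw [Real.sqrt_div hx, Real.sqrt_mul hx, div_div_eq_mul_div, mul_div_right_comm, Real.div_sqrt]

theorem mul_sqrt_div_eq_sqrt_mul {x : ℝ} (hx : 0 ≤ x) (y : ℝ) : y * √(x / y) = √(x * y) := by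
  rw [Real.sqrt_div hx, Real.sqrt_mul hx, mul_div_left_comm, Real.div_sqrt]

theorem div_min_sqrt_add_mul_min_sqrt_le {a x y : ℝ} (ha : 0 ≤ a) (hx : 0 ≤ x) (hy : 0 ≤ y) :
    x / min a √(x / y) + y * min a √(x / y) ≤ x / a + 2 * √(x * y) := by
  have hmul : y * min a √(x / y) ≤ √(x * y) :=
    (mul_le_mul_of_nonneg_left (min_le_right _ _) hy).trans_eq (mul_sqrt_div_eq_sqrt_mul hx y)
  have hdiv : x / min a √(x / y) ≤ x / a + √(x * y) := by
    rcases min_choice a √(x / y) with h | h <;> rw [h]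
    · exact le_add_of_nonneg_right (Real.sqrt_nonneg _)
    · rw [div_sqrt_div_eq_sqrt_mul hx]
      exact le_add_of_nonneg_left (div_nonneg hx ha)
  linarith

variable {L Δ σ : ℝ}

theorem sqrt_rate_coeff_div (hLΔ : 0 ≤ L * Δ) (hσ : 0 ≤ σ) (T : ℝ) :
    √(40 * L * Δ / T / (8 * σ ^ 2)) = √(5 * L * Δ) / (σ * √T) := by
  have hnonneg : 0 ≤ 5 * L * Δ := by linarith
  calc
    √(40 * L * Δ / T / (8 * σ ^ 2)) = √(5 * L * Δ / (σ ^ 2 * T)) := by congr 1; ring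
    _ = √(5 * L * Δ) / (σ * √T) := by
      rw [Real.sqrt_div hnonneg, Real.sqrt_mul (sq_nonneg σ), Real.sqrt_sq hσ]

theorem sqrt_rate_coeff_mul (hLΔ : 0 ≤ L * Δ) (hσ : 0 ≤ σ) (T : ℝ) :
    √(40 * L * Δ / T * (8 * σ ^ 2)) = 8 * √5 * σ * √(L * Δ) / √T := by
  calc
    √(40 * L * Δ / T * (8 * σ ^ 2)) = √((8 * σ) ^ 2 * (5 * (L * Δ)) / T) := by congr 1; ring
    _ = 8 * σ * (√5 * √(L * Δ)) / √T := by
      rw [Real.sqrt_div (by positivity), Real.sqrt_mul (sq_nonneg _),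
        Real.sqrt_sq (by positivity), Real.sqrt_mul (by norm_num)]
    _ = 8 * √5 * σ * √(L * Δ) / √T := by ring

theorem rate_le_of_tuned_momentum {T β M : ℝ} (hLΔ : 0 ≤ L * Δ) (hσ : 0 ≤ σ) (hT : 0 ≤ T)
    (hM : 1 ≤ M) (hβ : β = min (1 / (16 * (M - 1))) (√(5 * L * Δ) / (σ * √T))) :
    40 * L * Δ / (β * T) + 8 * β * σ ^ 2 ≤
      640 * L * Δ * (M - 1) / T + 16 * √5 * σ * √(L * Δ) / √T := by
  have hcap : 0 ≤ 1 / (16 * (M - 1)) := one_div_nonneg.2 (by linarith)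
  have hx : 0 ≤ 40 * L * Δ / T := div_nonneg (by linarith) hT
  have hbalance := div_min_sqrt_add_mul_min_sqrt_le hcap hx (by positivity : 0 ≤ 8 * σ ^ 2)
  rw [sqrt_rate_coeff_div hLΔ hσ, sqrt_rate_coeff_mul hLΔ hσ, ← hβ] at hbalance
  calc
    40 * L * Δ / (β * T) + 8 * β * σ ^ 2 = 40 * L * Δ / T / β + 8 * σ ^ 2 * β := by ring
    _ ≤ 40 * L * Δ / T / (1 / (16 * (M - 1))) + 2 * (8 * √5 * σ * √(L * Δ) / √T) := hbalance
    _ = 640 * L * Δ * (M - 1) / T + 16 * √5 * σ * √(L * Δ) / √T := by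
      rw [div_div_eq_mul_div, div_one]
      ring

end Tuning

theorem nonconvex_rate_arithmetic_core_general
    {L Δ σ T β η G E Ehat Q : ℝ} (hL : 0 < L) (hΔ : 0 ≤ Δ) (hσ : 0 < σ) (hT : 0 < T)
    (hβ : 0 < β) (hη : η = β / (2 * √2 * L))
    (hE : E ≤ 2 * Ehat + G / 4)
    (hEhat : Ehat ≤ 2 * L * Δ / (β * T) + β * σ ^ 2 + (L ^ 2 * η ^ 2 / β ^ 2) * Q)
    (hQ : Q ≤ 4 * Δ / (η * T) + 2 * E)
    (hG : G ≤ 2 * Δ / (η * T) + E) :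
    G ≤ 40 * L * Δ / (β * T) + 8 * β * σ ^ 2 ∧
      ∀ M : ℝ, 1 < M →
        β = min (1 / (16 * (M - 1))) (√(5 * L * Δ) / (σ * √T)) →
        G ≤ 640 * L * Δ * (M - 1) / T + 16 * √5 * σ * √(L * Δ) / √T := by
  have hrate : G ≤ 40 * L * Δ / (β * T) + 8 * β * σ ^ 2 :=
    le_rate_of_momentum_error_bounds hL hΔ hT.le hβ hη hE hEhat hQ hG
  exact ⟨hrate, fun M hM htuned =>
    hrate.trans (rate_le_of_tuned_momentum (by positivity) hσ.le hT.le hM.le htuned)⟩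

/-- **Arithmetic core and tuning of the nonconvex rate.** With
`η = β/(2√2 L)` and nonnegative reals `G, E, Ê, Q` satisfying the four lemma inequalities,
we get `G ≤ 40LΔ/(βT) + 8βσ²`; moreover, if `M ≥ 2` and
`β = min{1/(16(M−1)), √(5LΔ)/(σ√T)}` then
`G ≤ 640LΔ(M−1)/T + 16√5 σ√(LΔ)/√T`. -/
theorem nonconvex_rate_arithmetic_core
    (L Δ σ T : ℝ) (hL : 0 < L) (hΔ : 0 < Δ) (hσ : 0 < σ) (hT : 0 < T)
    (β η : ℝ) (hβ0 : 0 < β) (hβ1 : β < 1)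
    (hη : η = β / (2 * Real.sqrt 2 * L))
    (G E Ehat Q : ℝ) (hG : 0 ≤ G) (hE : 0 ≤ E) (hEhat : 0 ≤ Ehat) (hQ : 0 ≤ Q)
    (h1 : E ≤ 2 * Ehat + G / 4)
    (h2 : Ehat ≤ 2 * L * Δ / (β * T) + β * σ ^ 2 + (L ^ 2 * η ^ 2 / β ^ 2) * Q)
    (h3 : Q ≤ 4 * Δ / (η * T) + 2 * E)
    (h4 : G ≤ 2 * Δ / (η * T) + E) :
    G ≤ 40 * L * Δ / (β * T) + 8 * β * σ ^ 2 ∧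
      ∀ M : ℕ, 2 ≤ M →
        β = min (1 / (16 * ((M : ℝ) - 1))) (Real.sqrt (5 * L * Δ) / (σ * Real.sqrt T)) →
        G ≤ 640 * L * Δ * ((M : ℝ) - 1) / T +
          16 * Real.sqrt 5 * σ * Real.sqrt (L * Δ) / Real.sqrt T := by
  have hgen := nonconvex_rate_arithmetic_core_general hL hΔ.le hσ hT hβ0 hη h1 h2 h3 h4
  exact ⟨hgen.1, fun M hM => hgen.2 M (Nat.one_lt_cast.2 hM)⟩
end
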